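/- There exists an absolute constant c > 0 such that for every d ≥ 1, every n ∈ ℕ and every function f : {0,1}^n → {0,1}, E_x[‖∇f(x)‖₂] ≥ c·√d·W_{≥d}[f]. -/

import Mathlib

open Finset

noncomputable section

/-- Expectation over the uniform distribution on `{0,1}^n`. -/
def hcExp (n : ℕ) (g : (Fin n → Bool) → ℝ) : ℝ :=
  (∑ x : Fin n → Bool, g x) / 2 ^ n

/-- Flip the `i`-th coordinate of `x`. -/
def hcFlip {n : ℕ} (x : Fin n → Bool) (i : Fin n) : Fin n → Bool :=
  Function.update x i (!(x i))

/-- Sensitivity of `f` at `x`. -/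
def sens {n : ℕ} (f : (Fin n → Bool) → Bool) (x : Fin n → Bool) : ℕ :=
  (Finset.univ.filter fun i => f (hcFlip x i) ≠ f x).card

/-- `f` with values in `{0,1} ⊆ ℝ`. -/
def toReal {n : ℕ} (f : (Fin n → Bool) → Bool) : (Fin n → Bool) → ℝ :=
  fun x => if f x then 1 else 0

/-- Variance of a Boolean function. -/
def hcVar (n : ℕ) (f : (Fin n → Bool) → Bool) : ℝ :=
  hcExp n (toReal f) - (hcExp n (toReal f)) ^ 2

/-- Influence of coordinate `i`. -/
def influence (n : ℕ) (f : (Fin n → Bool) → Bool) (i : Fin n) : ℝ :=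
  hcExp n (fun x => if f (hcFlip x i) = f x then 0 else 1)

/-- Fourier character. -/
def chi {n : ℕ} (S : Finset (Fin n)) (x : Fin n → Bool) : ℝ :=
  ∏ i ∈ S, (if x i then (-1 : ℝ) else 1)

/-- Fourier coefficient of `g` at `S`. -/
def fcoef (n : ℕ) (g : (Fin n → Bool) → ℝ) (S : Finset (Fin n)) : ℝ :=
  hcExp n (fun x => g x * chi S x)

/-- Derivative of `g` along coordinate `i`. -/
def derivOn {n : ℕ} (g : (Fin n → Bool) → ℝ) (i : Fin n) (x : Fin n → Bool) : ℝ :=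
  g (Function.update x i false) - g (Function.update x i true)

/-- Euclidean norm of the gradient of `g` at `x`. -/
def gradNorm2 {n : ℕ} (g : (Fin n → Bool) → ℝ) (x : Fin n → Bool) : ℝ :=
  Real.sqrt (∑ i, (derivOn g i x) ^ 2)

/-- `ℓ_p` norm of the gradient of `g` at `x`. -/
def gradNormP {n : ℕ} (p : ℝ) (g : (Fin n → Bool) → ℝ) (x : Fin n → Bool) : ℝ :=
  (∑ i, |derivOn g i x| ^ p) ^ (1 / p)

/-- Fourier weight at exactly level `d`. -/
def wEq (n : ℕ) (g : (Fin n → Bool) → ℝ) (d : ℕ) : ℝ :=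
  ∑ S ∈ Finset.univ.filter (fun S : Finset (Fin n) => S.card = d), (fcoef n g S) ^ 2

/-- Approximate level-`d` Fourier weight: levels in `[d, 2d)`. -/
def wApprox (n : ℕ) (g : (Fin n → Bool) → ℝ) (d : ℕ) : ℝ :=
  ∑ S ∈ Finset.univ.filter (fun S : Finset (Fin n) => d ≤ S.card ∧ S.card < 2 * d),
    (fcoef n g S) ^ 2

/-- Fourier weight at levels `≥ d`. -/
def wGe (n : ℕ) (g : (Fin n → Bool) → ℝ) (d : ℕ) : ℝ :=
  ∑ S ∈ Finset.univ.filter (fun S : Finset (Fin n) => d ≤ S.card), (fcoef n g S) ^ 2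


/-!
Write `T_ρ` for the noise operator. The quantity
`E[g · T_{cos t} g] = ∑ S, (cos t) ^ |S| * ĝ(S) ^ 2` equals `E[g ^ 2]` at `t = 0`, and the speed at
which it decreases is `E⟨∇g, ∇ T_{cos t} g⟩ tan t / 4`. A reverse Poincaré inequality (Bessel's
inequality for the centered coordinate functions under the noise kernel) gives
`‖∇ T_{cos t} g‖₂ ≤ 2 cot t · ‖g‖_∞` pointwise, so by Cauchy–Schwarz the speed is at most
`‖g‖_∞ E‖∇g‖₂ / 2`, whatever `t` is. On the other hand, by time `t = 1 / √d` every level `≥ d` has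
lost a constant fraction of its Fourier weight.
-/

/-- The identification of bits with signs under which `chi` is a monomial: `true ↦ -1`. -/
def boolSign (b : Bool) : ℝ := if b then -1 else 1

lemma boolSign_true : boolSign true = -1 := rfl

lemma boolSign_false : boolSign false = 1 := rfl

lemma boolSign_mul_self (b : Bool) : boolSign b * boolSign b = 1 := by
  cases b <;> norm_num [boolSign_true, boolSign_false]

lemma sum_weighted_sum_sq_le {R α ι : Type*} [CommRing R] [LinearOrder R] [IsStrictOrderedRing R]
    [Fintype α] [Fintype ι] [DecidableEq ι] {p : α → R} (hp : ∀ y, 0 ≤ p y) {φ : ι → α → R} {c : R}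
    (hc : 0 ≤ c) (hφ : ∀ i j, ∑ y, p y * (φ i y * φ j y) = if i = j then c else 0) (g : α → R) :
    ∑ i, (∑ y, p y * (g y * φ i y)) ^ 2 ≤ c * ∑ y, p y * g y ^ 2 := by
  set w : ι → R := fun i => ∑ y, p y * (g y * φ i y) with hw
  set L : α → R := fun y => ∑ i, w i * φ i y with hL
  have inner_eq : ∑ y, p y * (g y * L y) = ∑ i, w i ^ 2 := by
    simp only [hL, mul_sum]
    rw [sum_comm]
    refine sum_congr rfl fun i _ => ?_
    rw [sq, hw, mul_sum]
    exact sum_congr rfl fun y _ => by ring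
  have norm_eq : ∑ y, p y * L y ^ 2 = c * ∑ i, w i ^ 2 := by
    calc ∑ y, p y * L y ^ 2
        = ∑ y, ∑ i, ∑ j, w i * (w j * (p y * (φ i y * φ j y))) := by
          refine sum_congr rfl fun y _ => ?_
          rw [sq, hL, sum_mul_sum, mul_sum]
          refine sum_congr rfl fun i _ => ?_
          rw [mul_sum]
          exact sum_congr rfl fun j _ => by ring
      _ = ∑ i, w i * ∑ j, w j * ∑ y, p y * (φ i y * φ j y) := by
          simp only [mul_sum]
          rw [sum_comm]
          exact sum_congr rfl fun i _ => sum_comm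
      _ = c * ∑ i, w i ^ 2 := by
          simp only [hφ, mul_ite, mul_zero, sum_ite_eq, mem_univ, if_true, mul_sum]
          exact sum_congr rfl fun i _ => by ring
  have cauchy_schwarz : (∑ i, w i ^ 2) ^ 2 ≤ (∑ y, p y * g y ^ 2) * (c * ∑ i, w i ^ 2) := by
    rw [← norm_eq, ← inner_eq]
    exact sum_sq_le_sum_mul_sum_of_sq_le_mul _ (fun y _ => mul_nonneg (hp y) (sq_nonneg _))
      (fun y _ => mul_nonneg (hp y) (sq_nonneg _)) fun y _ => le_of_eq (by ring)
  have bound_nonneg : 0 ≤ c * ∑ y, p y * g y ^ 2 :=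
    mul_nonneg hc (sum_nonneg fun y _ => mul_nonneg (hp y) (sq_nonneg _))
  rcases (sum_nonneg fun i (_ : i ∈ univ) => sq_nonneg (w i)).eq_or_lt with h | h
  · exact h ▸ bound_nonneg
  · exact le_of_mul_le_mul_right (by linarith) h

section NoiseKernel

variable {ι : Type*} [Fintype ι] {ρ : ℝ}

/-- For `|ρ| ≤ 1`, the probability that the `ρ`-correlated copy of `x` equals `y`: every bit is kept
with probability `(1 + ρ) / 2` and flipped with probability `(1 - ρ) / 2`, independently. -/
def noiseKernel (ρ : ℝ) (x y : ι → Bool) : ℝ :=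
  ∏ i, (1 + ρ * (boolSign (x i) * boolSign (y i))) / 2

/-- The noise operator `T_ρ`: the expectation of `g` over a `ρ`-correlated copy of `x`. -/
def noiseOp [DecidableEq ι] (ρ : ℝ) (g : (ι → Bool) → ℝ) (x : ι → Bool) : ℝ :=
  ∑ y, noiseKernel ρ x y * g y

lemma noiseKernel_nonneg (hρ : |ρ| ≤ 1) (x y : ι → Bool) : 0 ≤ noiseKernel ρ x y := by
  obtain ⟨h₁, h₂⟩ := abs_le.1 hρ
  refine prod_nonneg fun i _ => ?_
  cases x i <;> cases y i <;> simp only [boolSign_true, boolSign_false] <;> linarith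

variable [DecidableEq ι]

lemma sum_noiseKernel_mul_prod (ρ : ℝ) (x : ι → Bool) (φ : ι → Bool → ℝ) :
    ∑ y, noiseKernel ρ x y * ∏ i, φ i (y i) =
      ∏ i, ∑ b, (1 + ρ * (boolSign (x i) * boolSign b)) / 2 * φ i b := by
  simp only [noiseKernel, ← prod_mul_distrib, Fintype.prod_sum]

lemma sum_noiseKernel (ρ : ℝ) (x : ι → Bool) : ∑ y, noiseKernel ρ x y = 1 := by
  have h := sum_noiseKernel_mul_prod ρ x fun _ _ => 1
  simp only [prod_const_one, mul_one] at h
  rw [h]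
  refine prod_eq_one fun i _ => ?_
  simp only [Fintype.sum_bool, boolSign_true, boolSign_false]
  ring

lemma sum_noiseKernel_mul_centered_mul_centered (ρ : ℝ) (x : ι → Bool) (i j : ι) :
    ∑ y, noiseKernel ρ x y *
        ((boolSign (y i) - ρ * boolSign (x i)) * (boolSign (y j) - ρ * boolSign (x j))) =
      if i = j then 1 - ρ ^ 2 else 0 := by
  have as_prod : ∀ y : ι → Bool,
      (boolSign (y i) - ρ * boolSign (x i)) * (boolSign (y j) - ρ * boolSign (x j)) =
        ∏ k, ((if i = k then boolSign (y k) - ρ * boolSign (x k) else 1) *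
          if j = k then boolSign (y k) - ρ * boolSign (x k) else 1) := fun y => by
    simp only [prod_mul_distrib, prod_ite_eq, mem_univ, if_true]
  simp only [as_prod]
  rw [sum_noiseKernel_mul_prod ρ x fun k b =>
    (if i = k then boolSign b - ρ * boolSign (x k) else 1) *
      if j = k then boolSign b - ρ * boolSign (x k) else 1]
  split_ifs with hij
  · subst hij
    rw [Fintype.prod_eq_single i]
    · cases x i <;>
        simp only [Fintype.sum_bool, boolSign_true, boolSign_false, if_true] <;> ring
    · intro k hk
      simp only [Fintype.sum_bool, boolSign_true, boolSign_false, if_neg hk.symm]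
      ring
  · refine prod_eq_zero (mem_univ i) ?_
    cases x i <;>
      simp only [Fintype.sum_bool, boolSign_true, boolSign_false, if_true, if_neg (Ne.symm hij)] <;>
      ring

lemma noiseOp_le_of_forall_le (hρ : |ρ| ≤ 1) {g : (ι → Bool) → ℝ} {C : ℝ} (hg : ∀ y, g y ≤ C)
    (x : ι → Bool) : noiseOp ρ g x ≤ C :=
  calc noiseOp ρ g x ≤ ∑ y, noiseKernel ρ x y * C :=
        sum_le_sum fun y _ => mul_le_mul_of_nonneg_left (hg y) (noiseKernel_nonneg hρ x y)
    _ = C := by rw [← sum_mul, sum_noiseKernel, one_mul]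

lemma noiseKernel_update_false_sub_update_true (ρ : ℝ) (x y : ι → Bool) (i : ι) :
    (1 - ρ ^ 2) * (noiseKernel ρ (Function.update x i false) y -
        noiseKernel ρ (Function.update x i true) y) =
      2 * ρ * (noiseKernel ρ x y * (boolSign (y i) - ρ * boolSign (x i))) := by
  have kernel_eq : ∀ z : ι → Bool, (∀ j ≠ i, z j = x j) → noiseKernel ρ z y =
      (1 + ρ * (boolSign (z i) * boolSign (y i))) / 2 *
        ∏ j ∈ univ.erase i, (1 + ρ * (boolSign (x j) * boolSign (y j))) / 2 := fun z hz => by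
    rw [noiseKernel, ← mul_prod_erase _ _ (mem_univ i)]
    congr 1
    exact prod_congr rfl fun j hj => by rw [hz j (ne_of_mem_erase hj)]
  rw [kernel_eq _ fun j hj => Function.update_of_ne hj _ _,
    kernel_eq _ fun j hj => Function.update_of_ne hj _ _, kernel_eq x fun _ _ => rfl]
  simp only [Function.update_self]
  cases x i <;> cases y i <;> simp only [boolSign_true, boolSign_false] <;> ring

end NoiseKernel

section Gradient

variable {n : ℕ} {ρ M : ℝ} {g : (Fin n → Bool) → ℝ}

lemma derivOn_noiseOp (ρ : ℝ) (g : (Fin n → Bool) → ℝ) (i : Fin n) (x : Fin n → Bool) :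
    (1 - ρ ^ 2) * derivOn (noiseOp ρ g) i x =
      2 * ρ * ∑ y, noiseKernel ρ x y * (g y * (boolSign (y i) - ρ * boolSign (x i))) := by
  rw [derivOn, noiseOp, noiseOp, ← sum_sub_distrib, mul_sum, mul_sum]
  refine sum_congr rfl fun y _ => ?_
  linear_combination g y * noiseKernel_update_false_sub_update_true ρ x y i

lemma reverse_poincare (hρ : |ρ| ≤ 1) (g : (Fin n → Bool) → ℝ) (x : Fin n → Bool) :
    (1 - ρ ^ 2) * ∑ i, derivOn (noiseOp ρ g) i x ^ 2 ≤
      4 * ρ ^ 2 * noiseOp ρ (fun y => g y ^ 2) x := by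
  have var_nonneg : 0 ≤ 1 - ρ ^ 2 := sub_nonneg.2 ((sq_le_one_iff_abs_le_one ρ).2 hρ)
  have mean_sq_nonneg : 0 ≤ noiseOp ρ (fun y => g y ^ 2) x :=
    sum_nonneg fun y _ => mul_nonneg (noiseKernel_nonneg hρ x y) (sq_nonneg _)
  rcases var_nonneg.eq_or_lt with h | h
  · rw [← h, zero_mul]
    positivity
  have bessel := sum_weighted_sum_sq_le (noiseKernel_nonneg hρ x) var_nonneg
    (sum_noiseKernel_mul_centered_mul_centered ρ x) g
  refine le_of_mul_le_mul_left ?_ h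
  calc (1 - ρ ^ 2) * ((1 - ρ ^ 2) * ∑ i, derivOn (noiseOp ρ g) i x ^ 2)
      = ∑ i, ((1 - ρ ^ 2) * derivOn (noiseOp ρ g) i x) ^ 2 := by
        simp only [mul_pow, ← mul_sum]
        ring
    _ = 4 * ρ ^ 2 *
          ∑ i, (∑ y, noiseKernel ρ x y * (g y * (boolSign (y i) - ρ * boolSign (x i)))) ^ 2 := by
        simp only [derivOn_noiseOp, mul_pow, ← mul_sum]
        ring
    _ ≤ 4 * ρ ^ 2 * ((1 - ρ ^ 2) * noiseOp ρ (fun y => g y ^ 2) x) := by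
        gcongr
        exact bessel
    _ = (1 - ρ ^ 2) * (4 * ρ ^ 2 * noiseOp ρ (fun y => g y ^ 2) x) := by ring

lemma sqrt_mul_gradNorm2_noiseOp_le (hρ : |ρ| ≤ 1) (hg : ∀ x, |g x| ≤ M) (x : Fin n → Bool) :
    √(1 - ρ ^ 2) * gradNorm2 (noiseOp ρ g) x ≤ 2 * |ρ| * M := by
  have M_nonneg : 0 ≤ M := (abs_nonneg _).trans (hg x)
  rw [gradNorm2, ← Real.sqrt_mul (sub_nonneg.2 ((sq_le_one_iff_abs_le_one ρ).2 hρ))]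
  refine Real.sqrt_le_iff.2 ⟨by positivity, ?_⟩
  calc (1 - ρ ^ 2) * ∑ i, derivOn (noiseOp ρ g) i x ^ 2
      ≤ 4 * ρ ^ 2 * noiseOp ρ (fun y => g y ^ 2) x := reverse_poincare hρ g x
    _ ≤ 4 * ρ ^ 2 * M ^ 2 := by
        gcongr
        exact noiseOp_le_of_forall_le hρ (fun y => sq_le_sq.2 ((hg y).trans (le_abs_self M))) x
    _ = (2 * |ρ| * M) ^ 2 := by rw [mul_pow, mul_pow, sq_abs]; ring

end Gradient

section Fourier

variable {n : ℕ}

lemma hcExp_mono {g h : (Fin n → Bool) → ℝ} (hgh : ∀ x, g x ≤ h x) : hcExp n g ≤ hcExp n h := by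
  unfold hcExp
  gcongr with x
  exact hgh x

lemma hcExp_const_mul (c : ℝ) (g : (Fin n → Bool) → ℝ) :
    hcExp n (fun x => c * g x) = c * hcExp n g := by
  rw [hcExp, hcExp, ← mul_sum, mul_div_assoc]

lemma hcExp_sub (g h : (Fin n → Bool) → ℝ) :
    hcExp n (fun x => g x - h x) = hcExp n g - hcExp n h := by
  rw [hcExp, hcExp, hcExp, sum_sub_distrib, sub_div]

lemma hcExp_sum {κ : Type*} (s : Finset κ) (g : κ → (Fin n → Bool) → ℝ) :
    hcExp n (fun x => ∑ k ∈ s, g k x) = ∑ k ∈ s, hcExp n (g k) := by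
  simp only [hcExp, sum_comm (t := s), sum_div]

lemma hcFlip_hcFlip (x : Fin n → Bool) (i : Fin n) : hcFlip (hcFlip x i) i = x := by
  simp [hcFlip]

lemma hcExp_comp_hcFlip (g : (Fin n → Bool) → ℝ) (i : Fin n) :
    hcExp n (fun x => g (hcFlip x i)) = hcExp n g := by
  have flip_involutive : Function.Involutive fun x : Fin n → Bool => hcFlip x i :=
    fun x => hcFlip_hcFlip x i
  rw [hcExp, hcExp, ← Equiv.sum_comp flip_involutive.toPerm g]
  rfl

lemma chi_eq_prod_boolSign (S : Finset (Fin n)) (x : Fin n → Bool) :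
    chi S x = ∏ i ∈ S, boolSign (x i) := rfl

lemma chi_hcFlip (S : Finset (Fin n)) (x : Fin n → Bool) (i : Fin n) :
    chi S (hcFlip x i) = (if i ∈ S then -1 else 1) * chi S x := by
  have factor : ∀ j, boolSign (hcFlip x i j) = (if i = j then -1 else 1) * boolSign (x j) := by
    intro j
    rcases eq_or_ne i j with rfl | hij
    · cases h : x i <;> simp [hcFlip, boolSign_true, boolSign_false, h]
    · simp [hcFlip, hij, hij.symm]
  simp only [chi_eq_prod_boolSign, factor, prod_mul_distrib, prod_ite_eq]

lemma fcoef_sub_comp_hcFlip (g : (Fin n → Bool) → ℝ) (i : Fin n) (S : Finset (Fin n)) :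
    fcoef n (fun x => g x - g (hcFlip x i)) S = if i ∈ S then 2 * fcoef n g S else 0 := by
  have flipped : hcExp n (fun x => g (hcFlip x i) * chi S x) =
      (if i ∈ S then -1 else 1) * fcoef n g S := by
    rw [← hcExp_comp_hcFlip _ i, fcoef, ← hcExp_const_mul]
    simp only [hcFlip_hcFlip, chi_hcFlip, mul_left_comm]
  simp only [fcoef, sub_mul, hcExp_sub] at flipped ⊢
  rw [flipped]
  split_ifs <;> ring

lemma noiseKernel_eq_sum_chi (ρ : ℝ) (x y : Fin n → Bool) :
    noiseKernel ρ x y = (∑ S, ρ ^ #S * (chi S x * chi S y)) / 2 ^ n := by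
  rw [noiseKernel, prod_div_distrib, prod_one_add, powerset_univ, prod_const, card_univ,
    Fintype.card_fin]
  simp only [prod_mul_distrib, prod_const, chi_eq_prod_boolSign]

lemma hcExp_mul_noiseOp (ρ : ℝ) (g h : (Fin n → Bool) → ℝ) :
    hcExp n (fun x => g x * noiseOp ρ h x) = ∑ S, ρ ^ #S * (fcoef n g S * fcoef n h S) := by
  have expand : ∀ x, g x * noiseOp ρ h x =
      ∑ S, ρ ^ #S * fcoef n h S * (g x * chi S x) := fun x => by
    simp only [noiseOp, noiseKernel_eq_sum_chi, fcoef, hcExp, sum_div, sum_mul, mul_sum]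
    rw [sum_comm]
    exact sum_congr rfl fun S _ => sum_congr rfl fun y _ => by ring
  simp only [expand, hcExp_sum, hcExp_const_mul]
  exact sum_congr rfl fun S _ => by rw [fcoef, fcoef]; ring

/-- The noise stability of `g`: its correlation `E[g · T_ρ g]` with its smoothed copy. -/
def noiseStability (ρ : ℝ) (g : (Fin n → Bool) → ℝ) : ℝ :=
  hcExp n fun x => g x * noiseOp ρ g x

lemma noiseStability_eq_sum (ρ : ℝ) (g : (Fin n → Bool) → ℝ) :
    noiseStability ρ g = ∑ S, ρ ^ #S * fcoef n g S ^ 2 := by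
  simp only [noiseStability, hcExp_mul_noiseOp, sq]

lemma derivOn_mul_derivOn (g h : (Fin n → Bool) → ℝ) (i : Fin n) (x : Fin n → Bool) :
    derivOn g i x * derivOn h i x = (g x - g (hcFlip x i)) * (h x - h (hcFlip x i)) := by
  have derivOn_eq : ∀ u : (Fin n → Bool) → ℝ,
      derivOn u i x = boolSign (x i) * (u x - u (hcFlip x i)) := fun u => by
    have update_self := Function.update_eq_self i x
    cases hx : x i <;> rw [hx] at update_self <;>
      simp [derivOn, hcFlip, boolSign_true, boolSign_false, hx, update_self]
  rw [derivOn_eq, derivOn_eq]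
  linear_combination (g x - g (hcFlip x i)) * (h x - h (hcFlip x i)) * boolSign_mul_self (x i)

lemma hcExp_derivOn_mul_derivOn (g h : (Fin n → Bool) → ℝ) (i : Fin n) :
    hcExp n (fun x => derivOn g i x * derivOn h i x) =
      2 * hcExp n (fun x => (g x - g (hcFlip x i)) * h x) := by
  have flipped := hcExp_comp_hcFlip (fun x => (g x - g (hcFlip x i)) * h (hcFlip x i)) i
  simp only [hcFlip_hcFlip] at flipped
  simp only [derivOn_mul_derivOn, mul_sub, hcExp_sub, ← flipped, ← hcExp_const_mul]
  rw [← hcExp_sub]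
  congr 1
  funext x
  ring

lemma hcExp_sum_derivOn_mul_derivOn_noiseOp (ρ : ℝ) (g h : (Fin n → Bool) → ℝ) :
    hcExp n (fun x => ∑ i, derivOn g i x * derivOn (noiseOp ρ h) i x) =
      4 * ∑ S : Finset (Fin n), #S * (ρ ^ #S * (fcoef n g S * fcoef n h S)) := by
  simp only [hcExp_sum, hcExp_derivOn_mul_derivOn, hcExp_mul_noiseOp, fcoef_sub_comp_hcFlip,
    mul_sum]
  rw [sum_comm]
  refine sum_congr rfl fun S _ => ?_
  simp only [ite_mul, zero_mul, mul_ite, mul_zero, sum_ite_mem, univ_inter, sum_const,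
    nsmul_eq_mul]
  ring

end Fourier

section Decay

variable {n : ℕ} {g : (Fin n → Bool) → ℝ} {M : ℝ}

lemma sqrt_mul_sum_card_mul_pow_mul_fcoef_sq_le {ρ : ℝ} (hρ : |ρ| ≤ 1) (hg : ∀ x, |g x| ≤ M) :
    2 * √(1 - ρ ^ 2) * ∑ S : Finset (Fin n), #S * (ρ ^ #S * fcoef n g S ^ 2) ≤
      |ρ| * (M * hcExp n (gradNorm2 g)) := by
  have pointwise : ∀ x, √(1 - ρ ^ 2) * ∑ i, derivOn g i x * derivOn (noiseOp ρ g) i x ≤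
      2 * |ρ| * M * gradNorm2 g x := fun x =>
    calc √(1 - ρ ^ 2) * ∑ i, derivOn g i x * derivOn (noiseOp ρ g) i x
        ≤ √(1 - ρ ^ 2) * (gradNorm2 g x * gradNorm2 (noiseOp ρ g) x) := by
          gcongr
          exact Real.sum_mul_le_sqrt_mul_sqrt _ _ _
      _ = √(1 - ρ ^ 2) * gradNorm2 (noiseOp ρ g) x * gradNorm2 g x := by ring
      _ ≤ 2 * |ρ| * M * gradNorm2 g x :=
          mul_le_mul_of_nonneg_right (sqrt_mul_gradNorm2_noiseOp_le hρ hg x) (Real.sqrt_nonneg _)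
  have averaged := hcExp_mono pointwise
  rw [hcExp_const_mul, hcExp_const_mul, hcExp_sum_derivOn_mul_derivOn_noiseOp] at averaged
  simp only [← sq] at averaged
  linarith

lemma hasDerivAt_noiseStability_cos (g : (Fin n → Bool) → ℝ) (t : ℝ) :
    HasDerivAt (fun s => noiseStability (Real.cos s) g)
      (∑ S : Finset (Fin n), #S * Real.cos t ^ (#S - 1) * -Real.sin t * fcoef n g S ^ 2) t := by
  simp only [noiseStability_eq_sum]
  exact HasDerivAt.fun_sum fun S _ => ((Real.hasDerivAt_cos t).pow #S).mul_const _

lemma neg_half_le_deriv_noiseStability_cos (hg : ∀ x, |g x| ≤ M) {t : ℝ}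
    (ht : t ∈ Set.Ioo 0 (Real.pi / 2)) :
    -(M * hcExp n (gradNorm2 g) / 2) ≤ deriv (fun s => noiseStability (Real.cos s) g) t := by
  obtain ⟨ht₀, ht₁⟩ := ht
  have sin_pos : 0 < Real.sin t := Real.sin_pos_of_pos_of_lt_pi ht₀ (by linarith)
  have cos_pos : 0 < Real.cos t := Real.cos_pos_of_mem_Ioo ⟨by linarith, ht₁⟩
  have energy := sqrt_mul_sum_card_mul_pow_mul_fcoef_sq_le (Real.abs_cos_le_one t) hg
  rw [← Real.sin_sq, Real.sqrt_sq sin_pos.le, abs_of_pos cos_pos] at energy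
  have cos_mul_deriv : Real.cos t * deriv (fun s => noiseStability (Real.cos s) g) t =
      -(Real.sin t * ∑ S : Finset (Fin n), #S * (Real.cos t ^ #S * fcoef n g S ^ 2)) := by
    rw [(hasDerivAt_noiseStability_cos g t).deriv, mul_sum, mul_sum, ← sum_neg_distrib]
    refine sum_congr rfl fun S _ => ?_
    rcases Nat.eq_zero_or_pos #S with h | h
    · simp [h]
    · rw [← mul_pow_sub_one h.ne' (Real.cos t)]
      ring
  refine le_of_mul_le_mul_left ?_ cos_pos
  linarith

lemma noiseStability_one_sub_noiseStability_cos_le (hg : ∀ x, |g x| ≤ M) {t : ℝ} (ht₀ : 0 ≤ t)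
    (ht : t ≤ Real.pi / 2) :
    noiseStability 1 g - noiseStability (Real.cos t) g ≤ t * (M * hcExp n (gradNorm2 g) / 2) := by
  have growth := (convex_Icc 0 (Real.pi / 2)).mul_sub_le_image_sub_of_le_deriv
    (fun s _ => (hasDerivAt_noiseStability_cos g s).continuousAt.continuousWithinAt)
    (fun s _ => (hasDerivAt_noiseStability_cos g s).differentiableAt.differentiableWithinAt)
    (fun s hs => neg_half_le_deriv_noiseStability_cos hg (by rwa [interior_Icc] at hs))
    0 ⟨le_rfl, ht₀.trans ht⟩ t ⟨ht₀, ht⟩ ht₀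
  rw [Real.cos_zero] at growth
  linarith

lemma cos_pow_sq_mul_le_one {t : ℝ} (ht : |t| ≤ Real.pi / 2) (k : ℕ) :
    (Real.cos t ^ k) ^ 2 * (1 + k * t ^ 2) ≤ 1 := by
  have cos_sq_mul_le : Real.cos t ^ 2 * (1 + t ^ 2) ≤ 1 := by
    have cos_nonneg : 0 ≤ Real.cos t := Real.cos_nonneg_of_mem_Icc (abs_le.1 ht)
    obtain ⟨ht₁, ht₂⟩ := abs_le.1 ht
    have cos_le : Real.cos t ≤ 1 / √(t ^ 2 + 1) :=
      Real.cos_le_one_div_sqrt_sq_add_one (by linarith [Real.pi_pos]) (by linarith [Real.pi_pos])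
    calc Real.cos t ^ 2 * (1 + t ^ 2) ≤ (1 / √(t ^ 2 + 1)) ^ 2 * (1 + t ^ 2) := by gcongr
      _ = 1 := by
        rw [div_pow, Real.sq_sqrt (by positivity)]
        field_simp
        ring
  calc (Real.cos t ^ k) ^ 2 * (1 + k * t ^ 2)
      ≤ (Real.cos t ^ k) ^ 2 * (1 + t ^ 2) ^ k := by
        gcongr
        exact one_add_mul_le_pow (by linarith [sq_nonneg t]) k
    _ = (Real.cos t ^ 2 * (1 + t ^ 2)) ^ k := by rw [mul_pow, pow_right_comm]
    _ ≤ 1 := pow_le_one₀ (by positivity) cos_sq_mul_le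

lemma wGe_le_four_mul_noiseStability_one_sub {d : ℕ} {t : ℝ} (ht : |t| ≤ Real.pi / 2)
    (hdt : 1 ≤ d * t ^ 2) (g : (Fin n → Bool) → ℝ) :
    wGe n g d ≤ 4 * (noiseStability 1 g - noiseStability (Real.cos t) g) := by
  rw [noiseStability_eq_sum, noiseStability_eq_sum, ← sum_sub_distrib, wGe, mul_sum, sum_filter]
  refine sum_le_sum fun S _ => ?_
  split_ifs with hS
  · have cos_pow_sq_mul_two_le : (Real.cos t ^ #S) ^ 2 * 2 ≤ 1 :=
      calc (Real.cos t ^ #S) ^ 2 * 2 ≤ (Real.cos t ^ #S) ^ 2 * (1 + #S * t ^ 2) := by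
            gcongr
            have mul_sq_le : (d : ℝ) * t ^ 2 ≤ #S * t ^ 2 := by gcongr
            linarith
        _ ≤ 1 := cos_pow_sq_mul_le_one ht #S
    have cos_pow_le : Real.cos t ^ #S ≤ 3 / 4 := le_of_sq_le_sq (by linarith) (by norm_num)
    rw [one_pow]
    have loss_ge := mul_le_mul_of_nonneg_right cos_pow_le (sq_nonneg (fcoef n g S))
    linarith
  · have cos_pow_le : Real.cos t ^ #S ≤ 1 :=
      pow_le_one₀ (Real.cos_nonneg_of_mem_Icc (abs_le.1 ht)) (Real.cos_le_one t)
    rw [one_pow]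
    have loss_nonneg := mul_nonneg (sub_nonneg.2 cos_pow_le) (sq_nonneg (fcoef n g S))
    linarith

end Decay

theorem grad_lower_bound_level_ge_d_general (d n : ℕ) (g : (Fin n → Bool) → ℝ) (M : ℝ)
    (hg : ∀ x, |g x| ≤ M) :
    1 / 2 * √d * wGe n g d ≤ M * hcExp n (gradNorm2 g) := by
  rcases Nat.eq_zero_or_pos d with rfl | hd
  · have M_nonneg : 0 ≤ M := (abs_nonneg _).trans (hg fun _ => false)
    have exp_nonneg : 0 ≤ hcExp n (gradNorm2 g) :=
      div_nonneg (sum_nonneg fun _ _ => Real.sqrt_nonneg _) (by positivity)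
    simpa using mul_nonneg M_nonneg exp_nonneg
  have sqrt_ge_one : 1 ≤ √(d : ℝ) := Real.one_le_sqrt.2 (by exact_mod_cast hd)
  have sqrt_pos : 0 < √(d : ℝ) := by linarith
  have t_pos : 0 < 1 / √(d : ℝ) := one_div_pos.2 sqrt_pos
  have t_le : 1 / √(d : ℝ) ≤ Real.pi / 2 :=
    ((div_le_one sqrt_pos).2 sqrt_ge_one).trans (by linarith [Real.pi_gt_three])
  have d_mul_sq : 1 ≤ (d : ℝ) * (1 / √d) ^ 2 := by
    rw [div_pow, one_pow, Real.sq_sqrt d.cast_nonneg, mul_one_div_cancel (by positivity)]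
  have decay := noiseStability_one_sub_noiseStability_cos_le hg t_pos.le t_le
  have weight := wGe_le_four_mul_noiseStability_one_sub
    ((abs_of_pos t_pos).trans_le t_le) d_mul_sq g
  have combined : wGe n g d / 2 ≤ M * hcExp n (gradNorm2 g) / √d := by
    rw [div_eq_mul_one_div _ √(d : ℝ)]
    linarith
  rw [le_div_iff₀ sqrt_pos] at combined
  linarith

lemma abs_toReal_le_one {n : ℕ} (f : (Fin n → Bool) → Bool) (x : Fin n → Bool) :
    |toReal f x| ≤ 1 := by
  cases h : f x <;> simp [toReal, h]

theorem grad_lower_bound_level_ge_d :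
    ∃ c : ℝ, 0 < c ∧ ∀ (d : ℕ), 1 ≤ d → ∀ (n : ℕ) (f : (Fin n → Bool) → Bool),
      hcExp n (fun x => gradNorm2 (toReal f) x) ≥
        c * Real.sqrt d * wGe n (toReal f) d := by
  refine ⟨1 / 2, by norm_num, fun d _ n f => ?_⟩
  simpa using grad_lower_bound_level_ge_d_general d n (toReal f) 1 (abs_toReal_le_one f)

end
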